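/- Let α > -1 and f : (0,∞) → ℝ Borel measurable with suitable integrability. The mass-one equation ∫_{H₊} |K_f(z,w)|² dA(w) = K_f(z,z) holds for all z ∈ H₊ if and only if f(s) = Γ(α+1)^{-1} s^{α+1} · 1_E(s) for almost every s > 0, for some Borel set E ⊆ (0,∞). -/

import Mathlib

open MeasureTheory Complex

/-- The Laplace-type kernel `K_f(z,w) = (2 Re z)^{α/2}(2 Re w)^{α/2}
    ∫₀^∞ f(t) e^{-t(z + conj w)} dt`. -/
noncomputable def laplaceKernel (α : ℝ) (f : ℝ → ℝ) (z w : ℂ) : ℂ :=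
  (((2 * z.re) ^ (α / 2) * (2 * w.re) ^ (α / 2) : ℝ) : ℂ) *
    ∫ t in Set.Ioi (0 : ℝ),
      ((f t : ℝ) : ℂ) * Complex.exp (-(t : ℂ) * (z + (starRingEnd ℂ) w))

/-!
By the Plancherel theorem on the vertical lines `Re w = u` and the Gamma integral in `u`,
`∫ |K_f(z,w)|² dA(w) = K_g(z,z)` with `g(t) = Γ(α+1) t^{-(α+1)} f(t)²`. On the diagonal `K_f(z,z)`
is a nonzero multiple of the Laplace transform of `f` at `2 Re z`, and the Laplace transform is
injective, so the mass-one equation says `g = f` almost everywhere. This is a quadratic equation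
for `f(t)`, with roots `0` and `Γ(α+1)⁻¹ t^{α+1}`.
-/

open ProbabilityTheory Filter Set
open scoped FourierTransform SchwartzMap ENNReal ContDiff Topology ComplexConjugate

section Plancherel

variable {E F : Type*} [NormedAddCommGroup E] [InnerProductSpace ℝ E] [FiniteDimensional ℝ E]
  [MeasurableSpace E] [BorelSpace E] [NormedAddCommGroup F]

theorem ae_eq_of_forall_integral_schwartz_smul_eq [NormedSpace ℂ F] [CompleteSpace F]
    {μ : Measure E} {f g : E → F} (hf : LocallyIntegrable f μ) (hg : LocallyIntegrable g μ)
    (h : ∀ φ : 𝓢(E, ℂ), ∫ x, φ x • f x ∂μ = ∫ x, φ x • g x ∂μ) : f =ᵐ[μ] g := by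
  refine ae_eq_of_integral_contDiff_smul_eq hf hg fun φ hφ hφc ↦ ?_
  have hsupp : HasCompactSupport (ofRealCLM ∘ φ) := hφc.comp_left rfl
  have hsmooth : ContDiff ℝ ∞ (ofRealCLM ∘ φ) := by fun_prop
  simpa using h (hsupp.toSchwartzMap hsmooth)

theorem integral_schwartz_smul_fourier_eq [NormedSpace ℂ F] [CompleteSpace F]
    (φ : 𝓢(E, ℂ)) {g : E → F} (hg : Integrable g) :
    ∫ x, φ x • 𝓕 g x = ∫ x, 𝓕 φ x • g x := by
  have h := VectorFourier.integral_fourierIntegral_smul_eq_flip (L := innerₗ E)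
    Real.continuous_fourierChar continuous_inner (φ.integrable (μ := volume)) hg
  rw [flip_innerₗ] at h
  exact h.symm

theorem continuous_fourier_of_integrable [NormedSpace ℂ F] {g : E → F} (hg : Integrable g) :
    Continuous (𝓕 g) :=
  VectorFourier.fourierIntegral_continuous Real.continuous_fourierChar (L := innerₗ E)
    continuous_inner hg

variable [InnerProductSpace ℂ F] [CompleteSpace F]

theorem integral_schwartz_smul_fourier_lp_eq (φ : 𝓢(E, ℂ)) (h : Lp F 2 (volume : Measure E)) :
    ∫ x, φ x • (𝓕 h : Lp F 2 (volume : Measure E)) x = ∫ x, 𝓕 φ x • h x := by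
  simpa using congrArg (fun T : 𝓢'(E, F) ↦ T φ)
    (Lp.fourier_toTemperedDistribution_eq h).symm

theorem fourier_lp_ae_eq_fourier_iff {h : Lp F 2 (volume : Measure E)} {g : E → F}
    (hg : Integrable g) :
    (𝓕 h : Lp F 2 (volume : Measure E)) =ᵐ[volume] 𝓕 g ↔ h =ᵐ[volume] g := by
  have locInt (k : Lp F 2 (volume : Measure E)) : LocallyIntegrable k :=
    (Lp.memLp k).locallyIntegrable one_le_two
  refine ⟨fun hfg ↦ ?_, fun hfg ↦ ?_⟩
  · refine ae_eq_of_forall_integral_schwartz_smul_eq (locInt h) hg.locallyIntegrable fun φ ↦ ?_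
    rw [← FourierTransform.fourier_fourierInv_eq (F := 𝓢(E, ℂ)) φ,
      ← integral_schwartz_smul_fourier_lp_eq, ← integral_schwartz_smul_fourier_eq _ hg]
    exact integral_congr_ae <| hfg.mono fun x hx ↦ by simp only [hx]
  · refine ae_eq_of_forall_integral_schwartz_smul_eq (locInt _)
      (continuous_fourier_of_integrable hg).locallyIntegrable fun φ ↦ ?_
    rw [integral_schwartz_smul_fourier_lp_eq, integral_schwartz_smul_fourier_eq φ hg]
    exact integral_congr_ae <| hfg.mono fun x hx ↦ by simp only [hx]

theorem eLpNorm_fourier_eq {g : E → F} (hg : Integrable g) :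
    eLpNorm (𝓕 g) 2 = eLpNorm g 2 := by
  by_cases hex : ∃ h : Lp F 2 (volume : Measure E), h =ᵐ[volume] g
  · obtain ⟨h, hhg⟩ := hex
    rw [← eLpNorm_congr_ae hhg, ← eLpNorm_congr_ae ((fourier_lp_ae_eq_fourier_iff hg).2 hhg),
      ← Lp.enorm_def, ← Lp.enorm_def, ← ofReal_norm, ← ofReal_norm, Lp.norm_fourier_eq]
  · have hg_top : eLpNorm g 2 = ⊤ := by
      by_contra hne
      have hmem : MemLp g 2 := ⟨hg.aestronglyMeasurable, lt_top_iff_ne_top.2 hne⟩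
      exact hex ⟨hmem.toLp g, hmem.coeFn_toLp⟩
    have hFg_top : eLpNorm (𝓕 g) 2 = ⊤ := by
      by_contra hne
      have hmem : MemLp (𝓕 g) 2 :=
        ⟨(continuous_fourier_of_integrable hg).aestronglyMeasurable, lt_top_iff_ne_top.2 hne⟩
      refine hex ⟨𝓕⁻ (hmem.toLp (𝓕 g)), (fourier_lp_ae_eq_fourier_iff hg).1 ?_⟩
      rw [FourierTransform.fourier_fourierInv_eq]
      exact hmem.coeFn_toLp
    rw [hg_top, hFg_top]

theorem lintegral_enorm_sq_fourier_eq {g : E → F} (hg : Integrable g) :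
    ∫⁻ ξ, ‖𝓕 g ξ‖ₑ ^ 2 = ∫⁻ x, ‖g x‖ₑ ^ 2 := by
  have eLpNorm_sq (f : E → F) : eLpNorm f 2 ^ 2 = ∫⁻ x, ‖f x‖ₑ ^ 2 := by
    simpa using eLpNorm_nnreal_pow_eq_lintegral (f := f) (μ := volume) (p := 2) two_ne_zero
  rw [← eLpNorm_sq, ← eLpNorm_sq, eLpNorm_fourier_eq hg]

end Plancherel

section MGF

theorem eqOn_complexMGF_of_mgf_eventuallyEq {Ω Ω' : Type*} {mΩ : MeasurableSpace Ω}
    {mΩ' : MeasurableSpace Ω'} {X : Ω → ℝ} {Y : Ω' → ℝ} {μ : Measure Ω} {ν : Measure Ω'} {x₀ : ℝ}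
    (hμ : x₀ ∈ interior (integrableExpSet X μ)) (hν : x₀ ∈ interior (integrableExpSet Y ν))
    (h : mgf X μ =ᶠ[𝓝 x₀] mgf Y ν) :
    EqOn (complexMGF X μ) (complexMGF Y ν)
      {z | z.re ∈ interior (integrableExpSet X μ) ∩ interior (integrableExpSet Y ν)} := by
  have hconvex : Convex ℝ (interior (integrableExpSet X μ) ∩ interior (integrableExpSet Y ν)) :=
    convex_integrableExpSet.interior.inter convex_integrableExpSet.interior
  have hofReal : Tendsto ofReal (𝓝[≠] x₀) (𝓝[≠] (x₀ : ℂ)) :=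
    continuous_ofReal.continuousWithinAt.tendsto_nhdsWithin fun x hx ↦ by simpa using hx
  refine AnalyticOnNhd.eqOn_of_preconnected_of_frequently_eq (𝕜 := ℂ)
    (analyticOnNhd_complexMGF.mono fun _ hz ↦ hz.1) (analyticOnNhd_complexMGF.mono fun _ hz ↦ hz.2)
    (hconvex.linear_preimage reLm).isPreconnected (z₀ := x₀) (by simp [hμ, hν])
    (hofReal.frequently (Eventually.frequently ?_))
  filter_upwards [h.filter_mono nhdsWithin_le_nhds] with x hx
  rw [complexMGF_ofReal, complexMGF_ofReal, hx]

theorem measure_eq_of_mgf_id_eventuallyEq {μ ν : Measure ℝ} [IsFiniteMeasure μ] [IsFiniteMeasure ν]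
    (hμ : 0 ∈ interior (integrableExpSet id μ)) (hν : 0 ∈ interior (integrableExpSet id ν))
    (h : mgf id μ =ᶠ[𝓝 0] mgf id ν) : μ = ν := by
  refine Measure.ext_of_charFun (funext fun t ↦ ?_)
  rw [← complexMGF_id_mul_I, ← complexMGF_id_mul_I]
  exact eqOn_complexMGF_of_mgf_eventuallyEq hμ hν h (by simp [hμ, hν])

theorem mem_integrableExpSet_id_withDensity_ofReal {μ : Measure ℝ} {h : ℝ → ℝ} {x : ℝ}
    (hh : AEMeasurable h μ) (hint : Integrable (fun t ↦ h t * Real.exp (x * t)) μ) :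
    x ∈ integrableExpSet id (μ.withDensity fun t ↦ .ofReal (h t)) := by
  rw [integrableExpSet, mem_ofPred_eq,
    integrable_withDensity_iff_integrable_smul₀' hh.ennreal_ofReal (by simp)]
  refine hint.real_toNNReal.congr (.of_forall fun t ↦ ?_)
  simp [max_mul_of_nonneg, Real.exp_nonneg, ENNReal.toReal_ofReal']

theorem mgf_id_withDensity_ofReal {μ : Measure ℝ} {h : ℝ → ℝ} (hh : AEMeasurable h μ) (x : ℝ) :
    mgf id (μ.withDensity fun t ↦ .ofReal (h t)) x =
      ∫ t, ((h t * Real.exp (x * t)).toNNReal : ℝ) ∂μ := by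
  rw [mgf, integral_withDensity_eq_integral_toReal_smul₀ hh.ennreal_ofReal (by simp)]
  simp [max_mul_of_nonneg, Real.exp_nonneg, ENNReal.toReal_ofReal']

theorem ae_eq_zero_of_eventually_integral_mul_exp_eq_zero {μ : Measure ℝ} {h : ℝ → ℝ}
    (hint : ∀ᶠ x in 𝓝 0, Integrable (fun t ↦ h t * Real.exp (x * t)) μ)
    (hzero : ∀ᶠ x in 𝓝 0, ∫ t, h t * Real.exp (x * t) ∂μ = 0) : h =ᵐ[μ] 0 := by
  have hh : Integrable h μ := by simpa using hint.self_of_nhds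
  have hh' : Integrable (fun t ↦ -h t) μ := hh.neg
  have hint' : ∀ᶠ x in 𝓝 0, Integrable (fun t ↦ -h t * Real.exp (x * t)) μ :=
    hint.mono fun x hx ↦ by simpa using hx.neg
  have := isFiniteMeasure_withDensity_ofReal hh.2
  have := isFiniteMeasure_withDensity_ofReal hh'.2
  have hpos_eq_neg :
      μ.withDensity (fun t ↦ .ofReal (h t)) = μ.withDensity (fun t ↦ .ofReal (-h t)) := by
    refine measure_eq_of_mgf_id_eventuallyEq ?_ ?_ ?_
    · exact mem_interior_iff_mem_nhds.2 <|
        hint.mono fun x ↦ mem_integrableExpSet_id_withDensity_ofReal hh.aemeasurable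
    · exact mem_interior_iff_mem_nhds.2 <|
        hint'.mono fun x ↦ mem_integrableExpSet_id_withDensity_ofReal hh'.aemeasurable
    · filter_upwards [hint, hzero] with x hx hx0
      rw [integral_eq_integral_pos_part_sub_integral_neg_part hx, sub_eq_zero] at hx0
      simpa only [mgf_id_withDensity_ofReal hh.aemeasurable,
        mgf_id_withDensity_ofReal hh'.aemeasurable, neg_mul] using hx0
  have hae := (withDensity_eq_iff hh.aemeasurable.ennreal_ofReal hh'.aemeasurable.ennreal_ofReal
    hh.lintegral_lt_top.ne).1 hpos_eq_neg
  filter_upwards [hae] with t ht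
  rcases le_total (h t) 0 with hle | hge
  · rw [ENNReal.ofReal_of_nonpos hle, eq_comm, ENNReal.ofReal_eq_zero, neg_nonpos] at ht
    exact le_antisymm hle ht
  · rw [ENNReal.ofReal_of_nonpos (neg_nonpos.2 hge), ENNReal.ofReal_eq_zero] at ht
    exact le_antisymm ht hge

theorem ae_eq_of_eventually_integral_mul_exp_neg_eq {μ : Measure ℝ} {f g : ℝ → ℝ} {x₀ : ℝ}
    (hf : ∀ᶠ x in 𝓝 x₀, Integrable (fun t ↦ f t * Real.exp (-(t * x))) μ)
    (hg : ∀ᶠ x in 𝓝 x₀, Integrable (fun t ↦ g t * Real.exp (-(t * x))) μ)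
    (hfg : ∀ᶠ x in 𝓝 x₀,
      ∫ t, f t * Real.exp (-(t * x)) ∂μ = ∫ t, g t * Real.exp (-(t * x)) ∂μ) :
    f =ᵐ[μ] g := by
  have hshift : Tendsto (fun y ↦ x₀ - y) (𝓝 0) (𝓝 x₀) := by
    simpa using (continuous_const.sub continuous_id).tendsto (x := (0 : ℝ)) (f := fun y ↦ x₀ - y)
  have hexp (t y : ℝ) : (f t - g t) * Real.exp (-(t * x₀)) * Real.exp (y * t) =
      f t * Real.exp (-(t * (x₀ - y))) - g t * Real.exp (-(t * (x₀ - y))) := by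
    rw [mul_assoc, ← Real.exp_add, ← sub_mul]
    ring_nf
  have hzero : (fun t ↦ (f t - g t) * Real.exp (-(t * x₀))) =ᵐ[μ] 0 := by
    refine ae_eq_zero_of_eventually_integral_mul_exp_eq_zero ?_ ?_
    · filter_upwards [hshift.eventually hf, hshift.eventually hg] with y hfy hgy
      simpa only [hexp, Pi.sub_def] using hfy.sub hgy
    · filter_upwards [hshift.eventually hf, hshift.eventually hg, hshift.eventually hfg]
        with y hfy hgy hfgy
      simp only [hexp, integral_sub hfy hgy, hfgy, sub_self]
  filter_upwards [hzero] with t ht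
  simpa [sub_eq_zero] using ht

end MGF

section LaplaceTransform

theorem lintegral_comp_mul_left_volume (F : ℝ → ℝ≥0∞) {a : ℝ} (ha : a ≠ 0) :
    ∫⁻ y, F y = .ofReal |a| * ∫⁻ v, F (a * v) := by
  rw [← (measurableEmbedding_mulLeft₀ ha).lintegral_map, ← smul_eq_mul, ← lintegral_smul_measure,
    Real.smul_map_volume_mul_left ha]

theorem setLIntegral_preimage_re {s : Set ℝ} {F : ℂ → ℝ≥0∞} (hF : Measurable F) :
    ∫⁻ w in re ⁻¹' s, F w = ∫⁻ u in s, ∫⁻ v : ℝ, F (u + v * I) := by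
  have hpre : measurableEquivRealProd.symm ⁻¹' (re ⁻¹' s) = s ×ˢ univ := by
    ext p
    simp [measurableEquivRealProd_symm_apply]
  rw [← volume_preserving_equiv_real_prod.symm.setLIntegral_comp_preimage_emb
    measurableEquivRealProd.symm.measurableEmbedding, hpre, Measure.volume_eq_prod,
    ← Measure.prod_restrict, Measure.restrict_univ, lintegral_prod _ (by fun_prop)]
  simp only [measurableEquivRealProd_symm_apply, mk_eq_add_mul_I]

/-- The one-sided Laplace transform `∫₀^∞ f(t) e^{-tz} dt`; it takes the value `0` where the
integral does not converge absolutely. -/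
noncomputable def laplaceTransform (f : ℝ → ℂ) (z : ℂ) : ℂ :=
  ∫ t in Ioi (0 : ℝ), f t * cexp (-(t : ℂ) * z)

theorem measurable_laplaceTransform {f : ℝ → ℂ} (hf : Measurable f) :
    Measurable (laplaceTransform f) := by
  have h : StronglyMeasurable fun p : ℂ × ℝ ↦ f p.2 * cexp (-(p.2 : ℂ) * p.1) :=
    Measurable.stronglyMeasurable (by fun_prop)
  exact h.integral_prod_right.measurable

theorem fourier_indicator_mul_cexp (f : ℝ → ℂ) (z : ℂ) (v : ℝ) :
    𝓕 ((Ioi (0 : ℝ)).indicator fun t ↦ f t * cexp (-(t : ℂ) * z)) v =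
      laplaceTransform f (z + (2 * Real.pi * v : ℝ) * I) := by
  rw [Real.fourier_real_eq_integral_exp_smul, laplaceTransform,
    ← integral_indicator measurableSet_Ioi]
  refine integral_congr_ae (.of_forall fun t ↦ ?_)
  by_cases ht : t ∈ Ioi (0 : ℝ)
  · simp only [indicator_of_mem ht, smul_eq_mul]
    rw [mul_left_comm, ← Complex.exp_add]
    push_cast
    ring_nf
  · simp only [indicator_of_notMem ht, smul_zero]

theorem lintegral_enorm_sq_laplaceTransform {f : ℝ → ℂ} {z : ℂ}
    (hf : IntegrableOn (fun t ↦ f t * cexp (-(t : ℂ) * z)) (Ioi 0)) :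
    ∫⁻ y : ℝ, ‖laplaceTransform f (z + y * I)‖ₑ ^ 2 =
      .ofReal (2 * Real.pi) * ∫⁻ t in Ioi (0 : ℝ), ‖f t * cexp (-(t : ℂ) * z)‖ₑ ^ 2 := by
  have hpi : 0 < 2 * Real.pi := Real.two_pi_pos
  rw [lintegral_comp_mul_left_volume _ hpi.ne', abs_of_pos hpi]
  simp only [← fourier_indicator_mul_cexp]
  rw [lintegral_enorm_sq_fourier_eq (hf.integrable_indicator measurableSet_Ioi),
    ← lintegral_indicator measurableSet_Ioi]
  congr! 3 with t
  by_cases ht : t ∈ Ioi (0 : ℝ) <;> simp [ht]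

theorem enorm_mul_cexp_neg_mul_add_sq (c : ℂ) (t u : ℝ) (z : ℂ) :
    ‖c * cexp (-(t : ℂ) * (z + u))‖ₑ ^ 2 =
      ‖c * cexp (-(t : ℂ) * z)‖ₑ ^ 2 * .ofReal (Real.exp (-(2 * t * u))) := by
  have hexp : ‖cexp (-(t : ℂ) * u)‖ₑ ^ 2 = .ofReal (Real.exp (-(2 * t * u))) := by
    rw [← ofReal_norm, ← ENNReal.ofReal_pow (norm_nonneg _), norm_exp, ← Real.exp_nat_mul]
    simp [mul_assoc]
  rw [mul_add, Complex.exp_add, ← mul_assoc, enorm_mul, mul_pow, hexp]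

theorem lintegral_enorm_sq_laplaceTransform_add_conj {f : ℝ → ℂ} {z : ℂ} {u : ℝ}
    (hf : IntegrableOn (fun t ↦ f t * cexp (-(t : ℂ) * (z + u))) (Ioi 0)) :
    ∫⁻ v : ℝ, ‖laplaceTransform f (z + conj (u + v * I))‖ₑ ^ 2 =
      .ofReal (2 * Real.pi) * ∫⁻ t in Ioi (0 : ℝ),
        ‖f t * cexp (-(t : ℂ) * z)‖ₑ ^ 2 * .ofReal (Real.exp (-(2 * t * u))) := by
  simp only [← enorm_mul_cexp_neg_mul_add_sq]
  rw [← lintegral_enorm_sq_laplaceTransform hf, ← lintegral_neg_eq_self]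
  simp [add_assoc]

theorem integrableOn_ofReal_mul_cexp {f : ℝ → ℝ} (hf : Measurable f) {s : Set ℝ} {z : ℂ}
    (h : IntegrableOn (fun t ↦ f t * Real.exp (-(t * z.re))) s) :
    IntegrableOn (fun t ↦ (f t : ℂ) * cexp (-(t : ℂ) * z)) s :=
  Integrable.mono h (by fun_prop) (.of_forall fun t ↦ by simp [norm_exp])

theorem enorm_ofReal_mul_cexp_sq (c t : ℝ) (z : ℂ) :
    ‖(c : ℂ) * cexp (-(t : ℂ) * z)‖ₑ ^ 2 = .ofReal (c ^ 2 * Real.exp (-(t * (2 * z.re)))) := by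
  rw [← ofReal_norm, ← ENNReal.ofReal_pow (norm_nonneg _), norm_mul, mul_pow, norm_real,
    Real.norm_eq_abs, sq_abs, norm_exp, ← Real.exp_nat_mul]
  congr 3
  simp only [Nat.cast_ofNat, neg_mul, neg_re, re_ofReal_mul]
  ring

theorem lintegral_two_mul_rpow_mul_exp_neg {α t : ℝ} (hα : -1 < α) (ht : 0 < t) :
    ∫⁻ u in Ioi (0 : ℝ), .ofReal ((2 * u) ^ α) * .ofReal (Real.exp (-(2 * t * u))) =
      ENNReal.ofReal (Real.Gamma (α + 1) * t ^ (-(α + 1)) / 2) := by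
  have hintegral : ∫ u in Ioi (0 : ℝ), u ^ (α + 1 - 1) * Real.exp (-(2 * t * u)) =
      (1 / (2 * t)) ^ (α + 1) * Real.Gamma (α + 1) :=
    Real.integral_rpow_mul_exp_neg_mul_Ioi (by linarith) (by positivity)
  have hintegrable : IntegrableOn (fun u ↦ u ^ α * Real.exp (-(2 * t * u))) (Ioi 0) := by
    simpa [neg_mul] using
      integrableOn_rpow_mul_exp_neg_mul_rpow (p := 1) hα one_pos (b := 2 * t) (by positivity)
  calc ∫⁻ u in Ioi (0 : ℝ), .ofReal ((2 * u) ^ α) * .ofReal (Real.exp (-(2 * t * u)))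
    _ = ∫⁻ u in Ioi (0 : ℝ), .ofReal (2 ^ α * (u ^ α * Real.exp (-(2 * t * u)))) := by
      refine setLIntegral_congr_fun measurableSet_Ioi fun u hu ↦ ?_
      have hu : 0 < u := hu
      rw [← ENNReal.ofReal_mul (by positivity), Real.mul_rpow two_pos.le hu.le, mul_assoc]
    _ = .ofReal (2 ^ α * ∫ u in Ioi (0 : ℝ), u ^ α * Real.exp (-(2 * t * u))) := by
      rw [← integral_const_mul, ofReal_integral_eq_lintegral_ofReal (hintegrable.const_mul _)]
      filter_upwards [ae_restrict_mem measurableSet_Ioi] with u (hu : 0 < u)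
      positivity
    _ = .ofReal (Real.Gamma (α + 1) * t ^ (-(α + 1)) / 2) := by
      rw [add_sub_cancel_right] at hintegral
      rw [hintegral, one_div, Real.inv_rpow (by positivity), Real.mul_rpow two_pos.le ht.le,
        Real.rpow_neg ht.le, Real.rpow_add_one two_ne_zero]
      congr 1
      field_simp

theorem lintegral_rpow_mul_enorm_sq_laplaceTransform {α : ℝ} (hα : -1 < α) {f : ℝ → ℂ}
    (hf : Measurable f) {z : ℂ}
    (hint : ∀ u : ℝ, 0 < u → IntegrableOn (fun t ↦ f t * cexp (-(t : ℂ) * (z + u))) (Ioi 0)) :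
    ∫⁻ w in {w : ℂ | 0 < w.re}, .ofReal ((2 * w.re) ^ α) * ‖laplaceTransform f (z + conj w)‖ₑ ^ 2 =
      .ofReal Real.pi * ∫⁻ t in Ioi (0 : ℝ),
        .ofReal (Real.Gamma (α + 1) * t ^ (-(α + 1))) * ‖f t * cexp (-(t : ℂ) * z)‖ₑ ^ 2 := by
  have hL : Measurable (laplaceTransform f) := measurable_laplaceTransform hf
  calc ∫⁻ w in {w : ℂ | 0 < w.re},
        .ofReal ((2 * w.re) ^ α) * ‖laplaceTransform f (z + conj w)‖ₑ ^ 2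
    _ = ∫⁻ u in Ioi (0 : ℝ), ∫⁻ v : ℝ,
        .ofReal ((2 * u) ^ α) * ‖laplaceTransform f (z + conj (u + v * I))‖ₑ ^ 2 := by
      refine (setLIntegral_preimage_re (s := Ioi 0) (by fun_prop)).trans ?_
      simp
    _ = ∫⁻ u in Ioi (0 : ℝ), ∫⁻ t in Ioi (0 : ℝ), .ofReal (2 * Real.pi) *
        (‖f t * cexp (-(t : ℂ) * z)‖ₑ ^ 2 *
          (.ofReal ((2 * u) ^ α) * .ofReal (Real.exp (-(2 * t * u))))) := by
      refine setLIntegral_congr_fun measurableSet_Ioi fun u hu ↦ ?_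
      rw [lintegral_const_mul _ (by fun_prop),
        lintegral_enorm_sq_laplaceTransform_add_conj (hint u hu),
        ← lintegral_const_mul _ (by fun_prop), ← lintegral_const_mul _ (by fun_prop)]
      congr! 2 with t
      ring
    _ = ∫⁻ t in Ioi (0 : ℝ), ∫⁻ u in Ioi (0 : ℝ), .ofReal (2 * Real.pi) *
        (‖f t * cexp (-(t : ℂ) * z)‖ₑ ^ 2 *
          (.ofReal ((2 * u) ^ α) * .ofReal (Real.exp (-(2 * t * u))))) :=
      lintegral_lintegral_swap (by fun_prop)
    _ = ∫⁻ t in Ioi (0 : ℝ), .ofReal Real.pi *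
        (.ofReal (Real.Gamma (α + 1) * t ^ (-(α + 1))) * ‖f t * cexp (-(t : ℂ) * z)‖ₑ ^ 2) := by
      refine setLIntegral_congr_fun measurableSet_Ioi fun t ht ↦ ?_
      rw [lintegral_const_mul _ (by fun_prop), lintegral_const_mul _ (by fun_prop),
        lintegral_two_mul_rpow_mul_exp_neg hα ht, mul_left_comm,
        ← ENNReal.ofReal_mul (by positivity), mul_comm, ← mul_assoc,
        ← ENNReal.ofReal_mul (by positivity)]
      congr 2
      ring
    _ = _ := lintegral_const_mul _ (by fun_prop)

end LaplaceTransform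

section LaplaceKernel

variable {α : ℝ} {f : ℝ → ℝ} {z : ℂ}

theorem laplaceKernel_eq (α : ℝ) (f : ℝ → ℝ) (z w : ℂ) :
    laplaceKernel α f z w = (((2 * z.re) ^ (α / 2) * (2 * w.re) ^ (α / 2) : ℝ) : ℂ) *
      laplaceTransform (fun t ↦ f t) (z + conj w) :=
  rfl

theorem measurable_laplaceKernel (α : ℝ) (hf : Measurable f) (z : ℂ) :
    Measurable (laplaceKernel α f z) := by
  have hL := measurable_laplaceTransform (f := fun t ↦ (f t : ℂ)) (by fun_prop)
  simp only [funext (laplaceKernel_eq α f z)]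
  fun_prop

theorem laplaceKernel_self (α : ℝ) (f : ℝ → ℝ) (hz : 0 < z.re) :
    laplaceKernel α f z z =
      ((2 * z.re) ^ α * ∫ t in Ioi (0 : ℝ), f t * Real.exp (-(t * (2 * z.re))) : ℝ) := by
  rw [laplaceKernel, ← Real.rpow_add (by positivity), add_halves, ofReal_mul,
    ← integral_complex_ofReal, add_conj]
  simp

theorem laplaceKernel_self_eq_iff {g : ℝ → ℝ}
    (hf : ∀ x : ℝ, 0 < x → IntegrableOn (fun t ↦ f t * Real.exp (-(t * x))) (Ioi 0))
    (hg : ∀ x : ℝ, 0 < x → IntegrableOn (fun t ↦ g t * Real.exp (-(t * x))) (Ioi 0)) :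
    (∀ z : ℂ, 0 < z.re → laplaceKernel α f z z = laplaceKernel α g z z) ↔
      f =ᵐ[volume.restrict (Ioi 0)] g := by
  refine ⟨fun h ↦ ?_, fun h z hz ↦ ?_⟩
  · have hpos : ∀ᶠ x : ℝ in 𝓝 1, 0 < x := eventually_gt_nhds one_pos
    refine ae_eq_of_eventually_integral_mul_exp_neg_eq (hpos.mono hf) (hpos.mono hg) ?_
    filter_upwards [hpos] with x hx
    have hre : 0 < ((x / 2 : ℝ) : ℂ).re := by simpa using hx
    have hself := h _ hre
    rw [laplaceKernel_self α f hre, laplaceKernel_self α g hre, ofReal_inj, ofReal_re,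
      mul_div_cancel₀ x two_ne_zero] at hself
    exact mul_left_cancel₀ (by positivity) hself
  · rw [laplaceKernel_self α f hz, laplaceKernel_self α g hz]
    congr 2
    exact integral_congr_ae (h.mono fun t ht ↦ by simp only [ht])

theorem enorm_laplaceKernel_sq (α : ℝ) (f : ℝ → ℝ) {w : ℂ} (hz : 0 < z.re) (hw : 0 < w.re) :
    ‖laplaceKernel α f z w‖ₑ ^ 2 = .ofReal ((2 * z.re) ^ α) *
      (.ofReal ((2 * w.re) ^ α) * ‖laplaceTransform (fun t ↦ f t) (z + conj w)‖ₑ ^ 2) := by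
  have hsq {r : ℝ} (hr : 0 < r) : ENNReal.ofReal (r ^ (α / 2)) ^ 2 = .ofReal (r ^ α) := by
    rw [← ENNReal.ofReal_pow (by positivity), ← Real.rpow_mul_natCast hr.le]
    norm_num
  rw [laplaceKernel_eq, enorm_mul, mul_pow, ← ofReal_norm, norm_real,
    Real.norm_of_nonneg (by positivity), ENNReal.ofReal_mul (by positivity), mul_pow,
    hsq (by positivity), hsq (by positivity), mul_assoc]

/-- The symbol `g` whose kernel gives the mass of `K_f` on the diagonal: with `dA = dx dy / π`,
`∫ |K_f(z,w)|² dA(w) = K_g(z,z)`. -/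
noncomputable def massSymbol (α : ℝ) (f : ℝ → ℝ) (t : ℝ) : ℝ :=
  Real.Gamma (α + 1) * t ^ (-(α + 1)) * f t ^ 2

theorem measurable_massSymbol_mul_exp (α : ℝ) (hf : Measurable f) (x : ℝ) :
    Measurable fun t ↦ massSymbol α f t * Real.exp (-(t * x)) := by
  unfold massSymbol
  fun_prop

theorem ae_nonneg_massSymbol_mul_exp (hα : -1 < α) (f : ℝ → ℝ) (x : ℝ) :
    0 ≤ᵐ[volume.restrict (Ioi 0)] fun t ↦ massSymbol α f t * Real.exp (-(t * x)) := by
  have hΓ : 0 < Real.Gamma (α + 1) := Real.Gamma_pos_of_pos (by linarith)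
  filter_upwards [ae_restrict_mem measurableSet_Ioi] with t (ht : 0 < t)
  unfold massSymbol
  positivity

theorem massSymbol_eq_self_iff (hα : -1 < α) {t : ℝ} (ht : 0 < t) :
    massSymbol α f t = f t ↔ f t = 0 ∨ f t = (Real.Gamma (α + 1))⁻¹ * t ^ (α + 1) := by
  have hΓ : 0 < Real.Gamma (α + 1) := Real.Gamma_pos_of_pos (by linarith)
  have hroot : Real.Gamma (α + 1) * (t ^ (α + 1))⁻¹ * f t = 1 ↔
      f t = (Real.Gamma (α + 1))⁻¹ * t ^ (α + 1) := by
    field_simp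
  rw [massSymbol, Real.rpow_neg ht.le, sq, ← mul_assoc, mul_left_eq_self₀, hroot, or_comm]

theorem lintegral_enorm_sq_laplaceKernel (hα : -1 < α) (hf : Measurable f) (hz : 0 < z.re)
    (hint : ∀ x : ℝ, 0 < x → IntegrableOn (fun t ↦ f t * Real.exp (-(t * x))) (Ioi 0)) :
    ∫⁻ w in {w : ℂ | 0 < w.re}, ‖laplaceKernel α f z w‖ₑ ^ 2 =
      .ofReal (Real.pi * (2 * z.re) ^ α) *
        ∫⁻ t in Ioi (0 : ℝ), .ofReal (massSymbol α f t * Real.exp (-(t * (2 * z.re)))) := by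
  have hΓ : 0 < Real.Gamma (α + 1) := Real.Gamma_pos_of_pos (by linarith)
  have hintC (u : ℝ) (hu : 0 < u) :
      IntegrableOn (fun t ↦ (f t : ℂ) * cexp (-(t : ℂ) * (z + u))) (Ioi 0) :=
    integrableOn_ofReal_mul_cexp hf (by simpa using hint _ (add_pos hz hu))
  have hL := measurable_laplaceTransform (f := fun t ↦ (f t : ℂ)) (by fun_prop)
  calc ∫⁻ w in {w : ℂ | 0 < w.re}, ‖laplaceKernel α f z w‖ₑ ^ 2
    _ = ∫⁻ w in {w : ℂ | 0 < w.re}, .ofReal ((2 * z.re) ^ α) *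
        (.ofReal ((2 * w.re) ^ α) * ‖laplaceTransform (fun t ↦ f t) (z + conj w)‖ₑ ^ 2) :=
      setLIntegral_congr_fun (measurableSet_lt measurable_const measurable_re)
        fun w hw ↦ enorm_laplaceKernel_sq α f hz hw
    _ = .ofReal ((2 * z.re) ^ α) * (.ofReal Real.pi * ∫⁻ t in Ioi (0 : ℝ),
        .ofReal (Real.Gamma (α + 1) * t ^ (-(α + 1))) *
          ‖(f t : ℂ) * cexp (-(t : ℂ) * z)‖ₑ ^ 2) := by
      rw [lintegral_const_mul _ (by fun_prop),
        lintegral_rpow_mul_enorm_sq_laplaceTransform hα (by fun_prop) hintC]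
    _ = _ := by
      rw [← mul_assoc, ← ENNReal.ofReal_mul (by positivity), mul_comm Real.pi]
      congr 1
      refine setLIntegral_congr_fun measurableSet_Ioi fun t ht ↦ ?_
      have hw : 0 ≤ Real.Gamma (α + 1) * t ^ (-(α + 1)) :=
        mul_nonneg hΓ.le (Real.rpow_nonneg (le_of_lt ht) _)
      rw [massSymbol, mul_assoc _ (f t ^ 2), ENNReal.ofReal_mul hw, enorm_ofReal_mul_cexp_sq]

theorem integrableOn_massSymbol_mul_exp (hα : -1 < α) (hf : Measurable f) (hz : 0 < z.re)
    (hint : ∀ x : ℝ, 0 < x → IntegrableOn (fun t ↦ f t * Real.exp (-(t * x))) (Ioi 0))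
    (hsq : IntegrableOn (fun w ↦ ‖laplaceKernel α f z w‖ ^ 2) {w : ℂ | 0 < w.re}) :
    IntegrableOn (fun t ↦ massSymbol α f t * Real.exp (-(t * (2 * z.re)))) (Ioi 0) := by
  have hfin := hsq.2.ne
  simp only [enorm_pow, enorm_norm, lintegral_enorm_sq_laplaceKernel hα hf hz hint] at hfin
  have hconst : ENNReal.ofReal (Real.pi * (2 * z.re) ^ α) ≠ 0 := by
    rw [ne_eq, ENNReal.ofReal_eq_zero, not_le]
    positivity
  exact (lintegral_ofReal_ne_top_iff_integrable
    (measurable_massSymbol_mul_exp α hf _).aestronglyMeasurable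
    (ae_nonneg_massSymbol_mul_exp hα f _)).1 (ENNReal.lt_top_of_mul_ne_top_right hfin hconst).ne

theorem mass_eq_laplaceKernel_massSymbol (hα : -1 < α) (hf : Measurable f) (hz : 0 < z.re)
    (hint : ∀ x : ℝ, 0 < x → IntegrableOn (fun t ↦ f t * Real.exp (-(t * x))) (Ioi 0)) :
    ((1 / Real.pi * ∫ w in {w : ℂ | 0 < w.re}, ‖laplaceKernel α f z w‖ ^ 2 : ℝ) : ℂ) =
      laplaceKernel α (massSymbol α f) z z := by
  have hmass : ∫ w in {w : ℂ | 0 < w.re}, ‖laplaceKernel α f z w‖ ^ 2 =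
      (∫⁻ w in {w : ℂ | 0 < w.re}, ‖laplaceKernel α f z w‖ₑ ^ 2).toReal := by
    simp only [← norm_pow, ← enorm_pow]
    exact integral_norm_eq_lintegral_enorm
      ((measurable_laplaceKernel α hf z).pow_const 2).aestronglyMeasurable
  rw [laplaceKernel_self α _ hz, hmass, lintegral_enorm_sq_laplaceKernel hα hf hz hint,
    integral_eq_lintegral_of_nonneg_ae (ae_nonneg_massSymbol_mul_exp hα f _)
      (measurable_massSymbol_mul_exp α hf _).aestronglyMeasurable,
    ENNReal.toReal_mul, ENNReal.toReal_ofReal (by positivity)]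
  field_simp

end LaplaceKernel

theorem exists_ae_eq_mul_indicator_one_iff {X M : Type*} [MeasurableSpace X] [MeasurableSpace M]
    [MulZeroOneClass M] [MeasurableSingletonClass M] {μ : Measure X} {s : Set X} {f g : X → M}
    (hs : MeasurableSet s) (hf : Measurable f) :
    (∃ E, MeasurableSet E ∧ E ⊆ s ∧ ∀ᵐ x ∂μ.restrict s, f x = g x * E.indicator (fun _ ↦ 1) x) ↔
      ∀ᵐ x ∂μ.restrict s, f x = 0 ∨ f x = g x := by
  refine ⟨fun ⟨E, _, _, hE⟩ ↦ hE.mono fun x hx ↦ ?_, fun h ↦ ?_⟩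
  · by_cases hxE : x ∈ E <;> simp [hx, hxE]
  · refine ⟨s ∩ (f ⁻¹' {0})ᶜ, hs.inter (hf (measurableSet_singleton 0)).compl,
      inter_subset_left, ?_⟩
    filter_upwards [h, ae_restrict_mem hs] with x hx hxs
    by_cases hfx : f x = 0
    · simp [hfx]
    · simpa [hfx, hxs] using hx

/-- The mass-one equation `∫_{H₊} |K_f(z,w)|² dA(w) = K_f(z,z)` holds for all `z ∈ H₊`
    if and only if `f(s) = Γ(α+1)⁻¹ s^{α+1} 1_E(s)` a.e. on `(0,∞)`
    for some Borel set `E ⊆ (0,∞)`. -/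
theorem mass_one_iff (α : ℝ) (hα : -1 < α) (f : ℝ → ℝ)
    (hf : Measurable f)
    (hint : ∀ x : ℝ, 0 < x →
      IntegrableOn (fun t => f t * Real.exp (-(t * x))) (Set.Ioi 0))
    (hsq : ∀ z : ℂ, 0 < z.re →
      IntegrableOn (fun w => ‖laplaceKernel α f z w‖ ^ 2) {w : ℂ | 0 < w.re}) :
    (∀ z : ℂ, 0 < z.re →
        (((1 / Real.pi) * ∫ w in {w : ℂ | 0 < w.re}, ‖laplaceKernel α f z w‖ ^ 2 : ℝ) : ℂ)
          = laplaceKernel α f z z)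
      ↔ ∃ E : Set ℝ, MeasurableSet E ∧ E ⊆ Set.Ioi 0 ∧
          ∀ᵐ s ∂(volume.restrict (Set.Ioi (0 : ℝ))),
            f s = (Real.Gamma (α + 1))⁻¹ * s ^ (α + 1) * E.indicator (fun _ => (1 : ℝ)) s := by
  have hint_mass (x : ℝ) (hx : 0 < x) :
      IntegrableOn (fun t ↦ massSymbol α f t * Real.exp (-(t * x))) (Ioi 0) := by
    have hz : 0 < ((x / 2 : ℝ) : ℂ).re := by simpa using hx
    simpa [mul_div_cancel₀] using integrableOn_massSymbol_mul_exp hα hf hz hint (hsq _ hz)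
  calc (∀ z : ℂ, 0 < z.re →
        (((1 / Real.pi) * ∫ w in {w : ℂ | 0 < w.re}, ‖laplaceKernel α f z w‖ ^ 2 : ℝ) : ℂ)
          = laplaceKernel α f z z)
    _ ↔ ∀ z : ℂ, 0 < z.re → laplaceKernel α (massSymbol α f) z z = laplaceKernel α f z z :=
      forall₂_congr fun z hz ↦ by rw [mass_eq_laplaceKernel_massSymbol hα hf hz hint]
    _ ↔ massSymbol α f =ᵐ[volume.restrict (Ioi 0)] f := laplaceKernel_self_eq_iff hint_mass hint
    _ ↔ ∀ᵐ s ∂volume.restrict (Ioi (0 : ℝ)),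
        f s = 0 ∨ f s = (Real.Gamma (α + 1))⁻¹ * s ^ (α + 1) :=
      eventually_congr <| (ae_restrict_mem measurableSet_Ioi).mono fun s hs ↦
        massSymbol_eq_self_iff hα hs
    _ ↔ _ := (exists_ae_eq_mul_indicator_one_iff measurableSet_Ioi hf).symm
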